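/- For every pair of integers (m,n) ∈ ℤ², the following are equivalent: (i) for every θ ∈ (0, π−ϖ) one has Im((m + n·τ)·e^{iθ}) ≥ 0; (ii) m ≥ 0 and n ≥ 0. (This is the lattice-direction criterion used to show that only monomials X^m Y^n with m, n ≥ 0 survive in the Laurent expansion of a bounded invariant function.) -/

import Mathlib

open Complex

/-- lattice-direction criterion: for `m, n ∈ ℤ`,
`Im((m + nτ)·e^{iθ}) ≥ 0` for all `θ ∈ (0, π − ϖ)` (where `ϖ = arg τ`) iff `m ≥ 0` and
`n ≥ 0`. -/
theorem statement7 (τ : ℂ) (hτ : 0 < τ.im) (m n : ℤ) :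
    (∀ θ : ℝ, 0 < θ → θ < Real.pi - Complex.arg τ →
      0 ≤ (((m : ℂ) + (n : ℂ) * τ) * Complex.exp ((θ : ℂ) * Complex.I)).im) ↔
    (0 ≤ m ∧ 0 ≤ n) := by
  have hτ0 : τ ≠ 0 := by
    rintro rfl
    simp at hτ
  have hr : 0 < ‖τ‖ := norm_pos_iff.mpr hτ0
  have hs : 0 < Real.sin (arg τ) := by
    rw [Complex.sin_arg]; positivity
  have h0 : 0 < arg τ := by
    rcases (Complex.arg_nonneg_iff.mpr hτ.le).lt_or_eq with h | h
    · exact h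
    · rw [← h] at hs; simp at hs
  have hpi : arg τ < Real.pi := by
    rcases (Complex.arg_le_pi τ).lt_or_eq with h | h
    · exact h
    · rw [h] at hs; simp at hs
  have key : ∀ θ : ℝ, (((m : ℂ) + (n : ℂ) * τ) * Complex.exp ((θ : ℂ) * Complex.I)).im
      = m * Real.sin θ + n * (‖τ‖ * Real.sin (θ + arg τ)) := by
    intro θ
    have h1 : ‖τ‖ * Real.cos (arg τ) = τ.re := Complex.norm_mul_cos_arg τ
    have h2 : ‖τ‖ * Real.sin (arg τ) = τ.im := Complex.norm_mul_sin_arg τ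
    rw [Real.sin_add, Complex.mul_im, Complex.exp_ofReal_mul_I_re, Complex.exp_ofReal_mul_I_im]
    simp only [add_re, add_im, mul_re, mul_im, intCast_re, intCast_im]
    rw [← h1, ← h2]
    ring
  simp only [key]
  constructor
  · intro h
    have hc : IsClosed {θ : ℝ | 0 ≤ m * Real.sin θ + n * (‖τ‖ * Real.sin (θ + arg τ))} :=
      isClosed_le (by fun_prop) (by fun_prop)
    have hsub : Set.Icc 0 (Real.pi - arg τ) ⊆
        {θ : ℝ | 0 ≤ m * Real.sin θ + n * (‖τ‖ * Real.sin (θ + arg τ))} := by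
      rw [← closure_Ioo (by linarith)]
      exact closure_minimal (fun θ hθ => h θ hθ.1 hθ.2) hc
    have a := hsub (Set.left_mem_Icc.mpr (by linarith))
    have b := hsub (Set.right_mem_Icc.mpr (by linarith))
    simp only [Set.mem_setOf_eq, Real.sin_zero, mul_zero, zero_add] at a
    simp only [Set.mem_setOf_eq, sub_add_cancel, Real.sin_pi, Real.sin_pi_sub, mul_zero,
      add_zero] at b
    have a' := nonneg_of_mul_nonneg_left a (mul_pos hr hs)
    have b' := nonneg_of_mul_nonneg_left b hs
    exact ⟨by exact_mod_cast b', by exact_mod_cast a'⟩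
  · rintro ⟨hm, hn⟩ θ h1 h2
    have hm' : (0 : ℝ) ≤ m := by exact_mod_cast hm
    have hn' : (0 : ℝ) ≤ n := by exact_mod_cast hn
    have s1 := Real.sin_nonneg_of_nonneg_of_le_pi h1.le (by linarith)
    have s2 := Real.sin_nonneg_of_nonneg_of_le_pi (x := θ + arg τ) (by linarith) (by linarith)
    positivity
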